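/- In the notation of the context, let w ∈ W_i and let (β₁,…,β_N) and (β'₁,…,β'_M) be two words in Π_i with w = s_{β_N}⋯s_{β₁} = s_{β'_M}⋯s_{β'₁}, both of minimal length among all expressions of w as a product of reflections in elements of Π_i (so N = M). Then S(β₁,…,β_N) = S(β'₁,…,β'_M) in M_θ. Hence there is a well-defined map w ↦ m_ε(w) from W_i to M_θ given by m_ε(w) = S(β₁,…,β_N) for any reduced expression of w. -/

import Mathlib

open scoped RealInnerProductSpace

set_option synthInstance.maxHeartbeats 1000000

noncomputable section

abbrev EucB (n : ℕ) := EuclideanSpace ℝ (Fin n)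

def eB (n : ℕ) (i : Fin n) : EucB n := EuclideanSpace.single i (1 : ℝ)

def DeltaB (n : ℕ) : Set (EucB n) :=
  {v | (∃ i j : Fin n, i < j ∧
          (v = eB n i + eB n j ∨ v = eB n i - eB n j ∨
           v = -eB n i + eB n j ∨ v = -eB n i - eB n j)) ∨
        ∃ i : Fin n, v = eB n i ∨ v = -eB n i}

def DeltaBpos (n : ℕ) : Set (EucB n) :=
  {v | (∃ i j : Fin n, i < j ∧ (v = eB n i + eB n j ∨ v = eB n i - eB n j)) ∨
        ∃ i : Fin n, v = eB n i}

def corootB (n : ℕ) (α : EucB n) : EucB n := (2 / ⟪α, α⟫) • α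

def corootForm (n : ℕ) (α : EucB n) : Module.Dual ℝ (EucB n) where
  toFun x := ⟪x, corootB n α⟫
  map_add' x y := inner_add_left _ _ _
  map_smul' c x := by simpa using real_inner_smul_left x (corootB n α) c

def sReflB (n : ℕ) (α : EucB n) : EucB n ≃ₗ[ℝ] EucB n :=
  if h : corootForm n α α = 2 then Module.reflection h else LinearEquiv.refl ℝ (EucB n)

def WeylB (n : ℕ) : Subgroup (EucB n ≃ₗ[ℝ] EucB n) :=
  Subgroup.closure {g | ∃ α ∈ DeltaB n, g = sReflB n α}

/-- The coroot lattice `Q∨`, the `ℤ`-span of the coroots. -/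
def QvB (n : ℕ) : Submodule ℤ (EucB n) :=
  Submodule.span ℤ {v | ∃ α ∈ DeltaB n, v = corootB n α}

/-- The submodule `2Q∨` of `Q∨`. -/
def twoQB (n : ℕ) : Submodule ℤ ↥(QvB n) :=
  LinearMap.range ((2 : ℤ) • (LinearMap.id : ↥(QvB n) →ₗ[ℤ] ↥(QvB n)))

/-- The quotient `Q∨/2Q∨`. -/
abbrev QModB (n : ℕ) := ↥(QvB n) ⧸ twoQB n

/-- The quotient map `π : Q∨ → Q∨/2Q∨`. -/
def piQ (n : ℕ) : ↥(QvB n) →ₗ[ℤ] QModB n := (twoQB n).mkQ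

/-- The `θ`-fixed vectors of `Q∨`. -/
def fixedQ (n : ℕ) (θ : EucB n ≃ₗ[ℝ] EucB n) : Submodule ℤ ↥(QvB n) where
  carrier := {v | θ (v : EucB n) = (v : EucB n)}
  add_mem' := by
    intro a b ha hb
    simp only [Set.mem_setOf_eq, Submodule.coe_add, map_add] at *
    rw [ha, hb]
  zero_mem' := by simp
  smul_mem' := by
    intro c a ha
    simp only [Set.mem_setOf_eq, Submodule.coe_smul, map_zsmul] at *
    rw [ha]

/-- The `θ`-antifixed vectors of `Q∨` (those with `θv = −v`). -/
def negQ (n : ℕ) (θ : EucB n ≃ₗ[ℝ] EucB n) : Submodule ℤ ↥(QvB n) where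
  carrier := {v | θ (v : EucB n) = -(v : EucB n)}
  add_mem' := by
    intro a b ha hb
    simp only [Set.mem_setOf_eq, Submodule.coe_add, map_add] at *
    rw [ha, hb]; abel
  zero_mem' := by simp
  smul_mem' := by
    intro c a ha
    simp only [Set.mem_setOf_eq, Submodule.coe_smul, map_zsmul] at *
    rw [ha, smul_neg]

/-- `A₋ = π({v ∈ Q∨ : θv = v})`. -/
def AmB (n : ℕ) (θ : EucB n ≃ₗ[ℝ] EucB n) : Submodule ℤ (QModB n) :=
  (fixedQ n θ).map (piQ n)

/-- `A₊ = π({v ∈ Q∨ : θv = −v})`. -/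
def ApB (n : ℕ) (θ : EucB n ≃ₗ[ℝ] EucB n) : Submodule ℤ (QModB n) :=
  (negQ n θ).map (piQ n)

/-- `M_θ = A₋/(A₋ ∩ A₊)`. -/
abbrev MthB (n : ℕ) (θ : EucB n ≃ₗ[ℝ] EucB n) :=
  ↥(AmB n θ) ⧸ (ApB n θ).comap (AmB n θ).subtype

open Classical in
/-- `m_β ∈ M_θ`, the class of `π(β∨)` (defined when `β∨ ∈ Q∨` is fixed by `θ`,
e.g. for `β` an imaginary root). -/
def mB (n : ℕ) (θ : EucB n ≃ₗ[ℝ] EucB n) (β : EucB n) : MthB n θ :=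
  if h : corootB n β ∈ QvB n ∧ θ (corootB n β) = corootB n β then
    Submodule.Quotient.mk
      ⟨piQ n ⟨corootB n β, h.1⟩,
        Submodule.mem_map_of_mem (p := fixedQ n θ) (by exact h.2)⟩
  else 0

/-- The imaginary roots of `θ` that are positive. -/
def ImPosB (n : ℕ) (θ : EucB n ≃ₗ[ℝ] EucB n) : Set (EucB n) :=
  {α | α ∈ DeltaBpos n ∧ θ α = α}

/-- The simple roots `Π_i` of the positive imaginary system: positive imaginary roots
that are not sums of two positive imaginary roots. -/
def SimpleImB (n : ℕ) (θ : EucB n ≃ₗ[ℝ] EucB n) : Set (EucB n) :=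
  {β | β ∈ ImPosB n θ ∧ ¬∃ γ δ : EucB n, γ ∈ ImPosB n θ ∧ δ ∈ ImPosB n θ ∧ β = γ + δ}

/-- The product `s_{β_N}⋯s_{β₁}` of the reflections of a word `(β₁, …, β_N)`. -/
def wordProdB (n : ℕ) (L : List (EucB n)) : EucB n ≃ₗ[ℝ] EucB n :=
  ((L.map (sReflB n)).reverse).prod

/-- `S(β₁,…,β_N) = ∑_j ε(s_{β₁}⋯s_{β_{j−1}}(β_j)) · m_{β_j}`, computed with an
accumulator recording the prefix product `s_{β₁}⋯s_{β_{j−1}}`. -/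
def SwordB (n : ℕ) (θ : EucB n ≃ₗ[ℝ] EucB n) (ε : EucB n → ZMod 2) :
    (EucB n ≃ₗ[ℝ] EucB n) → List (EucB n) → MthB n θ
  | _, [] => 0
  | acc, β :: rest =>
      (ε (acc β)).val • mB n θ β + SwordB n θ ε (acc * sReflB n β) rest

/-!
The value of `S` on a word with product `w` is the class in `M_θ` of `x - w x` for a single vector
`x`, so it depends on `w` only. Here `x` is chosen so that `⟪x, γ⟫` is an integer congruent to
`ε γ` modulo `2` for every imaginary root `γ`. A letter `β` then contributes
`⟪x, β⟫ • β∨ = x - s_β x` modulo `2Q∨`; the grading `ε ∘ s_β` of the remaining letters is given in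
the same way by `s_β x`, and the sum telescopes.

Such an `x` exists because the simple imaginary roots are linearly independent: they lie in an open
half-space and have pairwise non-positive inner products, since `α - β` is a root as soon as
`α ≠ β` are roots with `⟪α, β⟫ > 0`.
-/

section Indecomposable

theorem induction_of_isAddIndecomposable {M S : Type*} [AddMonoid M] [AddCommMonoid S]
    [LinearOrder S] [IsOrderedCancelAddMonoid S] {P : Set M} (hP : P.Finite) (f : M →+ S)
    (hf : ∀ v ∈ P, 0 < f v) {p : M → Prop} (hp : ∀ v, IsAddIndecomposable id P v → p v)
    (hp_add : ∀ v ∈ P, ∀ w ∈ P, v + w ∈ P → p v → p w → p (v + w)) {v : M} (hv : v ∈ P) :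
    p v := by
  by_contra hpv
  obtain ⟨u, ⟨huP, hpu⟩, hmin⟩ :=
    (hP.subset (Set.sep_subset P (¬p ·))).exists_minimalFor f _ ⟨v, hv, hpv⟩
  have lt_imp : ∀ a ∈ P, f a < f u → p a := fun a ha hlt ↦ by
    by_contra hpa
    exact hlt.not_ge (hmin ⟨ha, hpa⟩ hlt.le)
  obtain ⟨a, ha, b, hb, rfl⟩ : ∃ a ∈ P, ∃ b ∈ P, u = a + b := by
    by_contra! h
    exact hpu (hp u ⟨huP, fun a ha b hb hab ↦ absurd hab (h a ha b hb)⟩)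
  have hfa := hf a ha
  have hfb := hf b hb
  exact hpu <| hp_add a ha b hb huP (lt_imp a ha (by simpa using hfb))
    (lt_imp b hb (by simpa using hfa))

variable {E : Type*} [NormedAddCommGroup E] [InnerProductSpace ℝ E] {P : Set E}

theorem inner_nonpos_of_isAddIndecomposable (h0 : 0 ∉ P)
    (hsub : ∀ α ∈ P, ∀ β ∈ P, α ≠ β → 0 < ⟪α, β⟫ → α - β ∈ P ∨ β - α ∈ P) {α β : E}
    (hα : IsAddIndecomposable id P α) (hβ : IsAddIndecomposable id P β) (hne : α ≠ β) :
    ⟪α, β⟫ ≤ 0 := by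
  by_contra! hpos
  have hdiff : ∀ {γ δ : E}, IsAddIndecomposable id P γ → δ ∈ P → γ - δ ∉ P := by
    intro γ δ hγ hδ hmem
    rcases hγ.2 _ hmem _ hδ (sub_add_cancel γ δ).symm with h | h
    · exact h0 (h ▸ hmem)
    · exact h0 (h ▸ hδ)
  exact (hsub α hα.1 β hβ.1 hne hpos).elim (hdiff hα hβ.1) (hdiff hβ hα.1)

theorem linearIndependent_isAddIndecomposable (f : Module.Dual ℝ E) (hf : ∀ v ∈ P, 0 < f v)
    (hsub : ∀ α ∈ P, ∀ β ∈ P, α ≠ β → 0 < ⟪α, β⟫ → α - β ∈ P ∨ β - α ∈ P) :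
    LinearIndependent ℝ (Subtype.val : {β // IsAddIndecomposable id P β} → E) := by
  have h0 : (0 : E) ∉ P := fun h ↦ by simpa using hf 0 h
  refine LinearMap.BilinForm.linearIndependent_of_pairwise_le_zero (innerₗ E) ?_ f _
    (fun β ↦ hf β β.2.1) fun α β hne ↦ ?_
  · intro v hv
    exact real_inner_self_pos.mpr hv
  · exact inner_nonpos_of_isAddIndecomposable h0 hsub α.2 β.2 (Subtype.coe_ne_coe.mpr hne)

theorem exists_inner_eq_of_linearIndependent [FiniteDimensional ℝ E] {ι : Type*} {v : ι → E}
    (hv : LinearIndependent ℝ v) (c : ι → ℝ) : ∃ x : E, ∀ i, ⟪x, v i⟫ = c i := by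
  obtain ⟨φ, hφ⟩ := (Finsupp.linearCombination ℝ c ∘ₗ hv.repr).exists_extend
  refine ⟨(InnerProductSpace.toDual ℝ E).symm φ.toContinuousLinearMap, fun i ↦ ?_⟩
  have hvi : v i ∈ Submodule.span ℝ (Set.range v) := Submodule.subset_span ⟨i, rfl⟩
  calc ⟪(InnerProductSpace.toDual ℝ E).symm φ.toContinuousLinearMap, v i⟫
      = φ (v i) := by simp
    _ = Finsupp.linearCombination ℝ c (hv.repr ⟨v i, hvi⟩) := LinearMap.congr_fun hφ ⟨v i, hvi⟩
    _ = c i := by simp [hv.repr_eq_single i ⟨v i, hvi⟩ rfl]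

theorem exists_inner_eq_intCast_of_additive [FiniteDimensional ℝ E] (hP : P.Finite)
    (f : Module.Dual ℝ E) (hf : ∀ v ∈ P, 0 < f v)
    (hsub : ∀ α ∈ P, ∀ β ∈ P, α ≠ β → 0 < ⟪α, β⟫ → α - β ∈ P ∨ β - α ∈ P) {m : ℕ}
    {ε : E → ZMod m} (hε : ∀ α ∈ P, ∀ β ∈ P, α + β ∈ P → ε (α + β) = ε α + ε β) :
    ∃ x : E, ∀ γ ∈ P, ∃ z : ℤ, ⟪x, γ⟫ = z ∧ (z : ZMod m) = ε γ := by
  choose lift hlift using ZMod.intCast_surjective (n := m)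
  obtain ⟨x, hx⟩ := exists_inner_eq_of_linearIndependent
    (linearIndependent_isAddIndecomposable f hf hsub) fun β ↦ (lift (ε β) : ℝ)
  refine ⟨x, fun γ hγ ↦ induction_of_isAddIndecomposable hP f.toAddMonoidHom hf
    (p := fun γ ↦ ∃ z : ℤ, ⟪x, γ⟫ = z ∧ (z : ZMod m) = ε γ) ?_ ?_ hγ⟩
  · exact fun β hβ ↦ ⟨lift (ε β), hx ⟨β, hβ⟩, hlift _⟩
  · rintro α hα β hβ hαβ ⟨a, ha, ha'⟩ ⟨b, hb, hb'⟩
    exact ⟨a + b, by rw [inner_add_right, ha, hb, Int.cast_add],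
      by rw [hε α hα β hβ hαβ, ← ha', ← hb', Int.cast_add]⟩

end Indecomposable

section RootSystem

variable {n : ℕ}

/-- The lattice `ℤⁿ`. The roots of `Bₙ` are its vectors of squared length `1` or `2`. -/
def intLattice (n : ℕ) : AddSubgroup (EucB n) where
  carrier := {v | ∀ i, ∃ z : ℤ, v i = z}
  add_mem' {v w} hv hw i := by
    obtain ⟨a, ha⟩ := hv i
    obtain ⟨b, hb⟩ := hw i
    exact ⟨a + b, by simp [ha, hb]⟩
  zero_mem' _ := ⟨0, by simp⟩
  neg_mem' {v} hv i := by
    obtain ⟨a, ha⟩ := hv i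
    exact ⟨-a, by simp [ha]⟩

theorem eB_mem_intLattice (i : Fin n) : eB n i ∈ intLattice n := fun j ↦
  ⟨if j = i then 1 else 0, by simp [eB]⟩

theorem exists_inner_eq_intCast {v w : EucB n} (hv : v ∈ intLattice n) (hw : w ∈ intLattice n) :
    ∃ z : ℤ, ⟪v, w⟫ = z := by
  choose a ha using hv
  choose b hb using hw
  exact ⟨∑ i, a i * b i, by simp [PiLp.inner_apply, ha, hb, mul_comm]⟩

theorem inner_eB_eB (i j : Fin n) : ⟪eB n i, eB n j⟫ = if i = j then 1 else 0 :=
  orthonormal_iff_ite.mp EuclideanSpace.orthonormal_single i j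

theorem mem_intLattice_of_mem_DeltaB {v : EucB n} (hv : v ∈ DeltaB n) : v ∈ intLattice n := by
  have he := eB_mem_intLattice (n := n)
  rcases hv with ⟨i, j, -, rfl | rfl | rfl | rfl⟩ | ⟨i, rfl | rfl⟩
  · exact add_mem (he i) (he j)
  · exact sub_mem (he i) (he j)
  · exact add_mem (neg_mem (he i)) (he j)
  · exact sub_mem (neg_mem (he i)) (he j)
  · exact he i
  · exact neg_mem (he i)

theorem inner_self_of_mem_DeltaB {v : EucB n} (hv : v ∈ DeltaB n) :
    ⟪v, v⟫ = 1 ∨ ⟪v, v⟫ = 2 := by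
  rcases hv with ⟨i, j, hij, hv⟩ | ⟨i, rfl | rfl⟩
  · right
    rcases hv with rfl | rfl | rfl | rfl <;>
      simp only [inner_add_left, inner_add_right, inner_sub_left, inner_sub_right, inner_neg_left,
        inner_neg_right, inner_eB_eB, hij.ne, hij.ne', if_true, if_false] <;> norm_num
  · simp only [inner_eB_eB, if_true, true_or]
  · simp only [inner_neg_neg, inner_eB_eB, if_true, true_or]

theorem eq_one_or_eq_neg_one_of_sum_sq_le_three {ι : Type*} [Fintype ι] {z : ι → ℤ}
    (h : ∑ i, z i ^ 2 ≤ 3) {i : ι} (hi : z i ≠ 0) : z i = 1 ∨ z i = -1 := by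
  have hle : z i ^ 2 ≤ 3 :=
    (Finset.single_le_sum (fun j _ ↦ sq_nonneg (z j)) (Finset.mem_univ i)).trans h
  have : z i < 2 := by nlinarith
  have : -2 < z i := by nlinarith
  omega

theorem sum_sq_eq_card_support {ι : Type*} [Fintype ι] {z : ι → ℤ} (h : ∑ i, z i ^ 2 ≤ 3) :
    ∑ i, z i ^ 2 = Finset.card {i | z i ≠ 0} := by
  rw [Finset.card_filter]
  push_cast
  refine Finset.sum_congr rfl fun i _ ↦ ?_
  split_ifs with hi
  · rcases eq_one_or_eq_neg_one_of_sum_sq_le_three h hi with hz | hz <;> simp [hz]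
  · simpa using hi

theorem smul_eB_add_smul_eB_mem_DeltaB {i j : Fin n} (hij : i ≠ j) {a b : ℝ}
    (ha : a = 1 ∨ a = -1) (hb : b = 1 ∨ b = -1) : a • eB n i + b • eB n j ∈ DeltaB n := by
  wlog hlt : i < j generalizing i j a b
  · rw [add_comm]
    exact this hij.symm hb ha (hij.lt_or_gt.resolve_left hlt)
  refine Or.inl ⟨i, j, hlt, ?_⟩
  rcases ha with rfl | rfl <;> rcases hb with rfl | rfl <;>
    simp [← sub_eq_add_neg]

theorem smul_eB_mem_DeltaB (i : Fin n) {a : ℝ} (ha : a = 1 ∨ a = -1) : a • eB n i ∈ DeltaB n :=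
  Or.inr ⟨i, by rcases ha with rfl | rfl <;> simp⟩

theorem mem_DeltaB_of_mem_intLattice {v : EucB n} (hv : v ∈ intLattice n)
    (hnorm : ⟪v, v⟫ = 1 ∨ ⟪v, v⟫ = 2) : v ∈ DeltaB n := by
  choose z hz using hv
  have hsum : ⟪v, v⟫ = ((∑ i, z i ^ 2 : ℤ) : ℝ) := by
    simp only [PiLp.inner_apply, RCLike.inner_apply, conj_trivial, hz, sq, Int.cast_sum,
      Int.cast_mul]
  have hsum' : ∑ i, z i ^ 2 = 1 ∨ ∑ i, z i ^ 2 = 2 := by rw [hsum] at hnorm; exact_mod_cast hnorm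
  have hle : ∑ i, z i ^ 2 ≤ 3 := by omega
  have hcoord : v = ∑ i with z i ≠ 0, v i • eB n i := by
    have hne : ∀ i ∈ Finset.univ, v i • eB n i ≠ 0 → z i ≠ 0 := fun i _ h h0 ↦
      h (by simp [hz, h0])
    rw [Finset.sum_filter_of_ne hne]
    simpa [eB] using ((EuclideanSpace.basisFun (Fin n) ℝ).sum_repr v).symm
  have hmem : ∀ i ∈ Finset.univ.filter (z · ≠ 0), v i = 1 ∨ v i = -1 := fun i hi ↦ by
    rcases eq_one_or_eq_neg_one_of_sum_sq_le_three hle (Finset.mem_filter.mp hi).2 with h | h <;>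
      simp [hz, h]
  rw [sum_sq_eq_card_support hle] at hsum'
  rw [hcoord]
  rcases hsum' with hcard | hcard
  · obtain ⟨i, hi⟩ := Finset.card_eq_one.mp (Nat.cast_inj.mp hcard)
    rw [hi] at hmem ⊢
    rw [Finset.sum_singleton]
    exact smul_eB_mem_DeltaB i (hmem i (by simp))
  · obtain ⟨i, j, hij, hs⟩ := Finset.card_eq_two.mp (Nat.cast_inj.mp hcard)
    rw [hs] at hmem ⊢
    rw [Finset.sum_pair hij]
    exact smul_eB_add_smul_eB_mem_DeltaB hij (hmem i (by simp)) (hmem j (by simp))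

theorem ne_zero_of_mem_DeltaB {v : EucB n} (hv : v ∈ DeltaB n) : v ≠ 0 := by
  rintro rfl
  simpa using inner_self_of_mem_DeltaB hv

theorem sub_mem_DeltaB {α β : EucB n} (hα : α ∈ DeltaB n) (hβ : β ∈ DeltaB n) (hne : α ≠ β)
    (hpos : 0 < ⟪α, β⟫) : α - β ∈ DeltaB n := by
  have hαL := mem_intLattice_of_mem_DeltaB hα
  have hβL := mem_intLattice_of_mem_DeltaB hβ
  have hsub := sub_mem hαL hβL
  obtain ⟨k, hk⟩ := exists_inner_eq_intCast hsub hsub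
  obtain ⟨m, hm⟩ := exists_inner_eq_intCast hαL hβL
  have hm1 : (1 : ℝ) ≤ m := by
    rw [hm] at hpos
    exact_mod_cast hpos
  have hk_pos : (0 : ℝ) < k := hk ▸ real_inner_self_pos.mpr (sub_ne_zero.mpr hne)
  have hk_le : (k : ℝ) ≤ 2 := by
    have := real_inner_sub_sub_self α β
    rcases inner_self_of_mem_DeltaB hα with h | h <;>
      rcases inner_self_of_mem_DeltaB hβ with h' | h' <;> linarith
  have hk12 : k = 1 ∨ k = 2 := by
    have h0 : 0 < k := by exact_mod_cast hk_pos
    have h2 : k ≤ 2 := by exact_mod_cast hk_le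
    omega
  refine mem_DeltaB_of_mem_intLattice hsub ?_
  rw [hk]
  exact_mod_cast hk12

theorem DeltaBpos_subset_DeltaB (n : ℕ) : DeltaBpos n ⊆ DeltaB n := by
  rintro v (⟨i, j, hij, h | h⟩ | ⟨i, h⟩)
  · exact Or.inl ⟨i, j, hij, Or.inl h⟩
  · exact Or.inl ⟨i, j, hij, Or.inr (Or.inl h)⟩
  · exact Or.inr ⟨i, Or.inl h⟩

theorem mem_DeltaBpos_or_neg_mem_DeltaBpos {v : EucB n} (hv : v ∈ DeltaB n) :
    v ∈ DeltaBpos n ∨ -v ∈ DeltaBpos n := by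
  rcases hv with ⟨i, j, hij, h | h | h | h⟩ | ⟨i, h | h⟩
  · exact Or.inl (Or.inl ⟨i, j, hij, Or.inl h⟩)
  · exact Or.inl (Or.inl ⟨i, j, hij, Or.inr h⟩)
  · exact Or.inr (Or.inl ⟨i, j, hij, Or.inr (by rw [h]; abel)⟩)
  · exact Or.inr (Or.inl ⟨i, j, hij, Or.inl (by rw [h]; abel)⟩)
  · exact Or.inl (Or.inr ⟨i, h⟩)
  · exact Or.inr (Or.inr ⟨i, by rw [h, neg_neg]⟩)

theorem finite_DeltaBpos (n : ℕ) : (DeltaBpos n).Finite := by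
  refine (((Set.finite_range fun p : Fin n × Fin n ↦ eB n p.1 + eB n p.2).union
    (Set.finite_range fun p : Fin n × Fin n ↦ eB n p.1 - eB n p.2)).union
    (Set.finite_range (eB n))).subset ?_
  rintro v (⟨i, j, -, rfl | rfl⟩ | ⟨i, rfl⟩)
  · exact Or.inl (Or.inl ⟨(i, j), rfl⟩)
  · exact Or.inl (Or.inr ⟨(i, j), rfl⟩)
  · exact Or.inr ⟨i, rfl⟩

theorem exists_dual_pos_on_DeltaBpos (n : ℕ) :
    ∃ f : Module.Dual ℝ (EucB n), ∀ v ∈ DeltaBpos n, 0 < f v := by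
  let f : Module.Dual ℝ (EucB n) := innerₗ (EucB n) (WithLp.toLp 2 fun i ↦ (n : ℝ) - i)
  have hf : ∀ i, f (eB n i) = n - i := fun i ↦ by simp [f, eB, EuclideanSpace.inner_single_right]
  have hlt : ∀ i : Fin n, (i : ℝ) < n := fun i ↦ by exact_mod_cast i.2
  refine ⟨f, ?_⟩
  rintro v (⟨i, j, hij, rfl | rfl⟩ | ⟨i, rfl⟩)
  · rw [map_add, hf, hf]
    linarith [hlt i, hlt j]
  · have hij' : (i : ℝ) < j := by exact_mod_cast hij
    rw [map_sub, hf, hf]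
    linarith
  · rw [hf]
    linarith [hlt i]

end RootSystem

section Reflection

variable {n : ℕ}

theorem sReflB_apply {β : EucB n} (hβ : β ≠ 0) (x : EucB n) :
    sReflB n β x = x - ⟪x, β⟫ • corootB n β := by
  have hββ : ⟪β, β⟫ ≠ 0 := inner_self_ne_zero.mpr hβ
  have h : corootForm n β β = 2 := by
    change ⟪β, (2 / ⟪β, β⟫) • β⟫ = 2
    rw [real_inner_smul_right, div_mul_cancel₀ _ hββ]
  rw [sReflB, dif_pos h, Module.reflection_apply]
  change x - ⟪x, (2 / ⟪β, β⟫) • β⟫ • β = x - ⟪x, β⟫ • (2 / ⟪β, β⟫) • β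
  rw [real_inner_smul_right, smul_smul, mul_comm]

theorem sReflB_sReflB (β x : EucB n) : sReflB n β (sReflB n β x) = x := by
  unfold sReflB
  split_ifs with h
  · exact Module.involutive_reflection h x
  · rfl

theorem inner_sReflB_left {β : EucB n} (hβ : β ≠ 0) (x y : EucB n) :
    ⟪sReflB n β x, y⟫ = ⟪x, sReflB n β y⟫ := by
  rw [sReflB_apply hβ, sReflB_apply hβ, corootB]
  simp only [inner_sub_left, inner_sub_right, real_inner_smul_left, real_inner_smul_right]
  rw [real_inner_comm β y]
  ring

theorem corootB_mem_intLattice {β : EucB n} (hβ : β ∈ DeltaB n) : corootB n β ∈ intLattice n := by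
  have hβL := mem_intLattice_of_mem_DeltaB hβ
  rw [corootB]
  rcases inner_self_of_mem_DeltaB hβ with h | h <;> rw [h]
  · rw [div_one, two_smul]
    exact add_mem hβL hβL
  · rwa [div_self two_ne_zero, one_smul]

theorem sReflB_mem_DeltaB {β γ : EucB n} (hβ : β ∈ DeltaB n) (hγ : γ ∈ DeltaB n) :
    sReflB n β γ ∈ DeltaB n := by
  have hβ0 := ne_zero_of_mem_DeltaB hβ
  have hγL := mem_intLattice_of_mem_DeltaB hγ
  refine mem_DeltaB_of_mem_intLattice ?_ ?_
  · obtain ⟨z, hz⟩ := exists_inner_eq_intCast hγL (mem_intLattice_of_mem_DeltaB hβ)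
    rw [sReflB_apply hβ0, hz, Int.cast_smul_eq_zsmul]
    exact sub_mem hγL (zsmul_mem (corootB_mem_intLattice hβ) z)
  · rw [inner_sReflB_left hβ0, sReflB_sReflB]
    exact inner_self_of_mem_DeltaB hγ

end Reflection

section Imaginary

variable {n : ℕ} {θ : EucB n ≃ₗ[ℝ] EucB n} {ε : EucB n → ZMod 2}

/-- The set `Δ_i` of imaginary roots of `θ`, positive or not. -/
def ImB (n : ℕ) (θ : EucB n ≃ₗ[ℝ] EucB n) : Set (EucB n) :=
  {α | α ∈ DeltaB n ∧ θ α = α}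

/-- `x` represents the grading `ε` of the imaginary roots: pairing with `x` is an integer-valued
lift of `ε`. -/
def RepresentsGrading (θ : EucB n ≃ₗ[ℝ] EucB n) (ε : EucB n → ZMod 2) (x : EucB n) : Prop :=
  ∀ γ ∈ ImB n θ, ∃ z : ℤ, ⟪x, γ⟫ = z ∧ (z : ZMod 2) = ε γ

theorem ImPosB_subset_ImB (n : ℕ) (θ : EucB n ≃ₗ[ℝ] EucB n) : ImPosB n θ ⊆ ImB n θ :=
  fun _ h ↦ ⟨DeltaBpos_subset_DeltaB n h.1, h.2⟩

theorem mem_ImPosB_or_neg_mem_ImPosB {γ : EucB n} (hγ : γ ∈ ImB n θ) :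
    γ ∈ ImPosB n θ ∨ -γ ∈ ImPosB n θ :=
  (mem_DeltaBpos_or_neg_mem_DeltaBpos hγ.1).imp (⟨·, hγ.2⟩) (⟨·, by rw [map_neg, hγ.2]⟩)

theorem sub_mem_ImPosB_or {α β : EucB n} (hα : α ∈ ImPosB n θ) (hβ : β ∈ ImPosB n θ)
    (hne : α ≠ β) (hpos : 0 < ⟪α, β⟫) : α - β ∈ ImPosB n θ ∨ β - α ∈ ImPosB n θ := by
  have hsub : α - β ∈ ImB n θ :=
    ⟨sub_mem_DeltaB (DeltaBpos_subset_DeltaB n hα.1) (DeltaBpos_subset_DeltaB n hβ.1) hne hpos,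
      by rw [map_sub, hα.2, hβ.2]⟩
  simpa only [neg_sub] using mem_ImPosB_or_neg_mem_ImPosB hsub

theorem exists_representsGrading (hε_neg : ∀ α ∈ ImB n θ, ε (-α) = ε α)
    (hε_add : ∀ α ∈ ImB n θ, ∀ β ∈ ImB n θ, α + β ∈ ImB n θ → ε (α + β) = ε α + ε β) :
    ∃ x, RepresentsGrading θ ε x := by
  obtain ⟨f, hf⟩ := exists_dual_pos_on_DeltaBpos n
  have hsub := ImPosB_subset_ImB n θ
  obtain ⟨x, hx⟩ := exists_inner_eq_intCast_of_additive (P := ImPosB n θ)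
    ((finite_DeltaBpos n).subset fun _ h ↦ h.1) f (fun v hv ↦ hf v hv.1)
    (fun _ hα _ hβ ↦ sub_mem_ImPosB_or hα hβ)
    (fun α hα β hβ hαβ ↦ hε_add α (hsub hα) β (hsub hβ) (hsub hαβ))
  refine ⟨x, fun γ hγ ↦ ?_⟩
  rcases mem_ImPosB_or_neg_mem_ImPosB hγ with hpos | hneg
  · exact hx γ hpos
  · obtain ⟨z, hz, hzε⟩ := hx (-γ) hneg
    refine ⟨-z, ?_, ?_⟩
    · rw [Int.cast_neg, ← hz, inner_neg_right, neg_neg]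
    · rw [Int.cast_neg, hzε, hε_neg γ hγ, ZMod.neg_eq_self_mod_two]

theorem sReflB_mem_ImB {β γ : EucB n} (hβ : β ∈ ImB n θ) (hγ : γ ∈ ImB n θ) :
    sReflB n β γ ∈ ImB n θ := by
  refine ⟨sReflB_mem_DeltaB hβ.1 hγ.1, ?_⟩
  rw [sReflB_apply (ne_zero_of_mem_DeltaB hβ.1), corootB, map_sub, map_smul, map_smul, hβ.2, hγ.2]

theorem RepresentsGrading.sReflB {x β : EucB n} (hx : RepresentsGrading θ ε x)
    (hβ : β ∈ ImB n θ) : RepresentsGrading θ (ε ∘ sReflB n β) (sReflB n β x) := fun γ hγ ↦ by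
  rw [inner_sReflB_left (ne_zero_of_mem_DeltaB hβ.1)]
  exact hx _ (sReflB_mem_ImB hβ hγ)

end Imaginary

section FixedClass

variable {n : ℕ} {θ : EucB n ≃ₗ[ℝ] EucB n}

/-- The quotient map from the `θ`-fixed coroot lattice onto `M_θ`. -/
def fixedClass (n : ℕ) (θ : EucB n ≃ₗ[ℝ] EucB n) : fixedQ n θ →ₗ[ℤ] MthB n θ :=
  ((ApB n θ).comap (AmB n θ).subtype).mkQ ∘ₗ (piQ n).submoduleMap (fixedQ n θ)

theorem fixedClass_two_smul (u : fixedQ n θ) : fixedClass n θ ((2 : ℤ) • u) = 0 := by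
  have h : (piQ n).submoduleMap (fixedQ n θ) ((2 : ℤ) • u) = 0 :=
    Subtype.ext ((Submodule.Quotient.mk_eq_zero _).mpr ⟨u, rfl⟩)
  exact (congrArg ((ApB n θ).comap (AmB n θ).subtype).mkQ h).trans (map_zero _)

theorem fixedClass_zsmul {z : ℤ} {a : ZMod 2} (hz : (z : ZMod 2) = a) (u : fixedQ n θ) :
    fixedClass n θ (z • u) = a.val • fixedClass n θ u := by
  obtain ⟨k, hk⟩ : (2 : ℤ) ∣ z - a.val :=
    (ZMod.intCast_zmod_eq_zero_iff_dvd _ 2).mp (by simp [hz])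
  obtain rfl : z = a.val + 2 * k := by linarith
  rw [add_smul, mul_smul, map_add, fixedClass_two_smul, add_zero, natCast_zsmul, map_nsmul]

theorem exists_coe_eq_corootB_and_mB_eq {β : EucB n} (hβ : β ∈ ImB n θ) :
    ∃ u : fixedQ n θ, (u : EucB n) = corootB n β ∧ mB n θ β = fixedClass n θ u := by
  have hQ : corootB n β ∈ QvB n := Submodule.subset_span ⟨β, hβ.1, rfl⟩
  have hθ : θ (corootB n β) = corootB n β := by rw [corootB, map_smul, hβ.2]
  exact ⟨⟨⟨corootB n β, hQ⟩, hθ⟩, rfl, by rw [mB, dif_pos ⟨hQ, hθ⟩]; rfl⟩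

end FixedClass

section Word

variable {n : ℕ} {θ : EucB n ≃ₗ[ℝ] EucB n} {ε : EucB n → ZMod 2}

theorem wordProdB_cons_apply (β : EucB n) (L : List (EucB n)) (x : EucB n) :
    wordProdB n (β :: L) x = wordProdB n L (sReflB n β x) := by
  simp [wordProdB]

theorem SwordB_mul (g h : EucB n ≃ₗ[ℝ] EucB n) (L : List (EucB n)) :
    SwordB n θ ε (g * h) L = SwordB n θ (ε ∘ g) h L := by
  induction L generalizing h with
  | nil => rfl
  | cons β L ih => simp only [SwordB, mul_assoc, ih, LinearEquiv.mul_apply, Function.comp_apply]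

theorem SwordB_cons (β : EucB n) (L : List (EucB n)) :
    SwordB n θ ε 1 (β :: L) = (ε β).val • mB n θ β + SwordB n θ (ε ∘ sReflB n β) 1 L := by
  rw [← SwordB_mul, mul_one, SwordB, one_mul, LinearEquiv.coe_one, id]

theorem exists_fixedClass_eq_SwordB {x : EucB n} (hx : RepresentsGrading θ ε x)
    {L : List (EucB n)} (hL : ∀ β ∈ L, β ∈ ImB n θ) :
    ∃ v : fixedQ n θ, (v : EucB n) = x - wordProdB n L x ∧
      SwordB n θ ε 1 L = fixedClass n θ v := by
  induction L generalizing x ε with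
  | nil => exact ⟨0, by simp [wordProdB], (map_zero _).symm⟩
  | cons β L ih =>
    obtain ⟨hβ, hL⟩ := List.forall_mem_cons.mp hL
    obtain ⟨v, hv, hSv⟩ := ih (hx.sReflB hβ) hL
    obtain ⟨u, hu, hmu⟩ := exists_coe_eq_corootB_and_mB_eq hβ
    obtain ⟨z, hz, hzε⟩ := hx β hβ
    have hsx : sReflB n β x = x - z • corootB n β := by
      rw [sReflB_apply (ne_zero_of_mem_DeltaB hβ.1), hz, Int.cast_smul_eq_zsmul]
    refine ⟨z • u + v, ?_, ?_⟩
    · calc ((z • u + v : fixedQ n θ) : EucB n)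
          = z • corootB n β + (sReflB n β x - wordProdB n L (sReflB n β x)) := by
            rw [← hu, ← hv]; rfl
        _ = z • corootB n β + ((x - z • corootB n β) - wordProdB n (β :: L) x) := by
            rw [wordProdB_cons_apply, ← hsx]
        _ = x - wordProdB n (β :: L) x := by abel
    · rw [SwordB_cons, map_add, fixedClass_zsmul hzε, hmu, hSv]

end Word

theorem Sword_well_defined_general (n : ℕ) (θ : EucB n ≃ₗ[ℝ] EucB n) (ε : EucB n → ZMod 2)
    (hε_neg : ∀ α ∈ ImB n θ, ε (-α) = ε α)
    (hε_add : ∀ α ∈ ImB n θ, ∀ β ∈ ImB n θ, α + β ∈ ImB n θ → ε (α + β) = ε α + ε β)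
    (L L' : List (EucB n)) (hL : ∀ β ∈ L, β ∈ ImB n θ) (hL' : ∀ β ∈ L', β ∈ ImB n θ)
    (hLL' : wordProdB n L = wordProdB n L') : SwordB n θ ε 1 L = SwordB n θ ε 1 L' := by
  obtain ⟨x, hx⟩ := exists_representsGrading hε_neg hε_add
  obtain ⟨v, hv, hSv⟩ := exists_fixedClass_eq_SwordB hx hL
  obtain ⟨v', hv', hSv'⟩ := exists_fixedClass_eq_SwordB hx hL'
  have hvv' : v = v' := Subtype.ext (Subtype.ext (by rw [hv, hv', hLL']))
  rw [hSv, hSv', hvv']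

/-- Independence of reduced expression: if `L = (β₁,…,β_N)` and `L' = (β'₁,…,β'_M)` are
two minimal-length words in the simple imaginary roots `Π_i` whose products of
reflections both equal `w ∈ W_i`, then `N = M` and `S(β₁,…,β_N) = S(β'₁,…,β'_M)` in
`M_θ`.  Hence `w ↦ m_ε(w)` is a well-defined map `W_i → M_θ`. -/
theorem Sword_well_defined (n : ℕ) (hn : 0 < n)
    (θ : EucB n ≃ₗ[ℝ] EucB n) (hθW : θ ∈ WeylB n) (hθ2 : θ * θ = 1)
    (ε : EucB n → ZMod 2)
    (hε1 : ∀ α, α ∈ DeltaB n → θ α = α → ε (-α) = ε α)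
    (hε2 : ∀ α β : EucB n, α ∈ DeltaB n → θ α = α → β ∈ DeltaB n → θ β = β →
      α + β ∈ DeltaB n → ε (α + β) = ε α + ε β)
    (w : EucB n ≃ₗ[ℝ] EucB n) (L L' : List (EucB n))
    (hL : ∀ β ∈ L, β ∈ SimpleImB n θ) (hL' : ∀ β ∈ L', β ∈ SimpleImB n θ)
    (hLw : wordProdB n L = w) (hL'w : wordProdB n L' = w)
    (hLmin : ∀ K : List (EucB n), (∀ β ∈ K, β ∈ SimpleImB n θ) → wordProdB n K = w →
      L.length ≤ K.length)
    (hL'min : ∀ K : List (EucB n), (∀ β ∈ K, β ∈ SimpleImB n θ) → wordProdB n K = w →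
      L'.length ≤ K.length) :
    L.length = L'.length ∧ SwordB n θ ε 1 L = SwordB n θ ε 1 L' := by
  refine ⟨le_antisymm (hLmin L' hL' hL'w) (hL'min L hL hLw), ?_⟩
  exact Sword_well_defined_general n θ ε (fun α hα ↦ hε1 α hα.1 hα.2)
    (fun α hα β hβ hαβ ↦ hε2 α β hα.1 hα.2 hβ.1 hβ.2 hαβ.1) L L'
    (fun β hβ ↦ ImPosB_subset_ImB n θ (hL β hβ).1)
    (fun β hβ ↦ ImPosB_subset_ImB n θ (hL' β hβ).1) (hLw.trans hL'w.symm)
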